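/- Fix an integer N ≥ 2, t ∈ [0,1], n ≥ 1, an integer i ≥ N and θ ∈ [0,1). Then ρ^t_N({y : a_{n+1}(y) = i and s^t_{N,n}(y) < θ}) = ∫_{[0,θ)} P_{N,i}(s) dμ^t_{N,n}(s), where μ^t_{N,n} is the pushforward of ρ^t_N under the map y ↦ s^t_{N,n}(y) and P_{N,i}(s) = (s+N−1)/((s+i)(s+i−1)). Equivalently, G^t_{N,n+1}(1 − N/(i+θ)) − G^t_{N,n+1}(1 − N/i) = ∫_{[0,θ)} P_{N,i}(s) dμ^t_{N,n}(s). -/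

import Mathlib

open MeasureTheory Set Real Filter

/-- The Rényi-type continued fraction map `R_N`. -/
noncomputable def RN (N : ℕ) (x : ℝ) : ℝ :=
  if x = 1 then 0 else (N : ℝ) / (1 - x) - ⌊(N : ℝ) / (1 - x)⌋

/-- `digit N k x` is the `(k+1)`-st digit `a_{k+1}(x)`. -/
noncomputable def digit (N k : ℕ) (x : ℝ) : ℤ :=
  ⌊(N : ℝ) / (1 - (RN N)^[k] x)⌋

/-- The conditional probability measure `ρ^t_N`, with density
`N(N-1+t)/[N-(1-x)(1-t)]²` on `[0,1]`. -/
noncomputable def rhoT (N : ℕ) (t : ℝ) : Measure ℝ :=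
  (volume.restrict (Set.Icc (0 : ℝ) 1)).withDensity fun x =>
    ENNReal.ofReal ((N : ℝ) * ((N : ℝ) - 1 + t) / ((N : ℝ) - (1 - x) * (1 - t)) ^ 2)

/-- `s^t_{N,k}(y)` built from the digits of `y`. -/
noncomputable def sVar (N : ℕ) (t y : ℝ) : ℕ → ℝ
  | 0 => t
  | k + 1 => 1 - (N : ℝ) / ((digit N k y : ℝ) + sVar N t y k)

/-- `G^t_{N,n}(s)`. -/
noncomputable def Gt (N : ℕ) (t : ℝ) : ℕ → ℝ → ℝ
  | 0 => fun s => if s ≤ t then 0 else 1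
  | n + 1 => fun s => (rhoT N t {y | sVar N t y (n + 1) < s}).toReal

/-!
The maps `z ↦ 1 - N / (i + z)`, `i ≥ N`, are the inverse branches of `R_N`, and they are also the
maps that drive the recursion for `s^t_{N,k}`. On the cylinder `{a_1 = i}` a change of variables
turns `ρ^t_N` into `P_{N,i}(t) ρ^{t'}_N` with `t' = 1 - N / (i + t)`, because the `i`-th branch
pulls the density of `ρ^t_N` back to that of `ρ^{t'}_N` up to the factor `P_{N,i}(t)`. Since
moreover `s^t_{N,n+1}(y) = s^{t'}_{N,n}(R_N y)` on that cylinder, conditioning on the first digit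
writes both sides of the identity at stage `n + 1` for the parameter `t` as the same mixture, with
weights `P_{N,i}(t)`, of the two sides at stage `n` for the parameters `t'`; at stage `0` the
identity is `ρ^t_N(a_1 = i) = P_{N,i}(t)`. This is an induction on `n` with `t` varying. The formula
for `G^t_{N,n+1}` follows because `1 - N / i ≤ s^t_{N,n+1} < 1 - N / (i + θ)` says
`i ≤ a_{n+1} + s^t_{N,n} < i + θ`, that is, `a_{n+1} = i` and `s^t_{N,n} < θ`.
-/

/-- The inverse branch `z ↦ 1 - N / (i + z)` of `R_N` on the cylinder `{a_1 = i}`. The same map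
gives the recursion `s^t_{N,k} = 1 - N / (a_k + s^t_{N,k-1})`. -/
noncomputable def invBranch (N : ℕ) (i : ℤ) (z : ℝ) : ℝ :=
  1 - (N : ℝ) / ((i : ℝ) + z)

/-- The weight `P_{N,i}(s)`, which is the probability of `a_1 = i` under `ρ^s_N` for `i ≥ N`. -/
noncomputable def digitProb (N : ℕ) (i : ℤ) (s : ℝ) : ℝ :=
  (s + (N : ℝ) - 1) / ((s + (i : ℝ)) * (s + (i : ℝ) - 1))

/-- The density of `ρ^t_N` on `[0,1]`, as a real-valued function. -/
noncomputable def rhoDensity (N : ℕ) (t x : ℝ) : ℝ :=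
  (N : ℝ) * ((N : ℝ) - 1 + t) / ((N : ℝ) - (1 - x) * (1 - t)) ^ 2

section

variable {N : ℕ} {i j : ℤ} {s t x y z w θ : ℝ} {n : ℕ}

/-! ### Inverse branches -/

lemma RN_eq_fract (N : ℕ) (x : ℝ) : RN N x = Int.fract ((N : ℝ) / (1 - x)) := by
  by_cases hx : x = 1
  · simp [RN, hx]
  · simp only [RN, if_neg hx, Int.fract]

lemma RN_mem_Ico (N : ℕ) (x : ℝ) : RN N x ∈ Ico (0 : ℝ) 1 := by
  rw [RN_eq_fract]
  exact ⟨Int.fract_nonneg _, Int.fract_lt_one _⟩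

lemma digit_succ (N n : ℕ) (y : ℝ) : digit N (n + 1) y = digit N n (RN N y) := rfl

lemma div_one_sub_invBranch (hN : 1 ≤ N) (i : ℤ) (z : ℝ) :
    (N : ℝ) / (1 - invBranch N i z) = i + z := by
  rw [invBranch, sub_sub_cancel, div_div_cancel₀ (by positivity)]

lemma RN_invBranch (hN : 1 ≤ N) (i : ℤ) (hz : z ∈ Ico (0 : ℝ) 1) :
    RN N (invBranch N i z) = z := by
  rw [RN_eq_fract, div_one_sub_invBranch hN, Int.fract_intCast_add, Int.fract_eq_self.2 hz]

lemma digit_zero_invBranch (hN : 1 ≤ N) (i : ℤ) (hz : z ∈ Ico (0 : ℝ) 1) :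
    digit N 0 (invBranch N i z) = i := by
  rw [digit, Function.iterate_zero_apply, div_one_sub_invBranch hN, Int.floor_intCast_add,
    Int.floor_eq_zero_iff.2 hz, add_zero]

lemma invBranch_digit_RN (hN : 1 ≤ N) (x : ℝ) : invBranch N (digit N 0 x) (RN N x) = x := by
  rw [invBranch, RN_eq_fract, digit, Function.iterate_zero_apply, Int.floor_add_fract,
    div_div_cancel₀ (by positivity), sub_sub_cancel]

lemma invBranch_le_invBranch_iff (hN : 1 ≤ N) (hz : 0 < i + z) (hw : 0 < j + w) :
    invBranch N i z ≤ invBranch N j w ↔ i + z ≤ j + w := by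
  rw [invBranch, invBranch, sub_le_sub_iff_left, div_le_div_iff_of_pos_left (by positivity) hw hz]

lemma invBranch_mem_Ico (hN : 1 ≤ N) (hi : (N : ℤ) ≤ i) (hz : 0 ≤ z) :
    invBranch N i z ∈ Ico (0 : ℝ) 1 := by
  have hN' : (1 : ℝ) ≤ N := mod_cast hN
  have hi' : (N : ℝ) ≤ i := mod_cast hi
  have hpos : 0 < (i : ℝ) + z := by linarith
  refine ⟨sub_nonneg.2 ((div_le_one hpos).2 (by linarith)), sub_lt_self _ (by positivity)⟩

lemma one_sub_lt_invBranch (hN : 1 ≤ N) (hi : (N : ℤ) ≤ i) (hs : 1 - (N : ℝ) < s) :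
    1 - (N : ℝ) < invBranch N i s := by
  have hi' : (N : ℝ) ≤ i := mod_cast hi
  exact sub_lt_sub_left (div_lt_self (by positivity) (by linarith)) _

lemma hasDerivAt_invBranch (N : ℕ) (hz : (i : ℝ) + z ≠ 0) :
    HasDerivAt (invBranch N i) ((N : ℝ) / (i + z) ^ 2) z := by
  have h := ((hasDerivAt_const z (N : ℝ)).div ((hasDerivAt_id z).const_add (i : ℝ)) hz).const_sub 1
  exact h.congr_deriv (by simp [neg_div])

lemma le_digit_zero (hx : x ∈ Ico (0 : ℝ) 1) : (N : ℤ) ≤ digit N 0 x := by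
  have hpos : 0 < 1 - x := sub_pos.2 hx.2
  refine Int.le_floor.2 ((le_div_iff₀ hpos).2 ?_)
  exact mul_le_of_le_one_right (by positivity) (by linarith [hx.1])

lemma le_digit (n : ℕ) (hy : y ∈ Ico (0 : ℝ) 1) : (N : ℤ) ≤ digit N n y := by
  induction n generalizing y with
  | zero => exact le_digit_zero hy
  | succ _ ih => exact ih (RN_mem_Ico N y)

lemma digit_zero_inter_preimage_RN (hN : 1 ≤ N) (hi : (N : ℤ) ≤ i) (B : Set ℝ) :
    digit N 0 ⁻¹' {i} ∩ RN N ⁻¹' B ∩ Ico 0 1 = invBranch N i '' (B ∩ Ico 0 1) := by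
  ext x
  constructor
  · rintro ⟨⟨rfl, hB⟩, -⟩
    exact ⟨RN N x, ⟨hB, RN_mem_Ico N x⟩, invBranch_digit_RN hN x⟩
  · rintro ⟨z, ⟨hB, hz⟩, rfl⟩
    exact ⟨⟨digit_zero_invBranch hN i hz, mem_preimage.2 (by rwa [RN_invBranch hN i hz])⟩,
      invBranch_mem_Ico hN hi hz.1⟩

/-! ### The variables `s^t_{N,n}` -/

lemma sVar_succ (N : ℕ) (t y : ℝ) (n : ℕ) :
    sVar N t y (n + 1) = invBranch N (digit N n y) (sVar N t y n) := rfl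

lemma sVar_succ_eq_sVar_RN (N : ℕ) (t y : ℝ) (n : ℕ) :
    sVar N t y (n + 1) = sVar N (invBranch N (digit N 0 y) t) (RN N y) n := by
  induction n with
  | zero => rfl
  | succ n ih => rw [sVar_succ, ih, digit_succ, ← sVar_succ]

lemma sVar_nonneg (hN : 1 ≤ N) (ht : 0 ≤ t) (hy : y ∈ Ico (0 : ℝ) 1) (n : ℕ) :
    0 ≤ sVar N t y n := by
  induction n with
  | zero => exact ht
  | succ n ih => exact (invBranch_mem_Ico hN (le_digit n hy) ih).1

lemma sVar_lt_one (hN : 1 ≤ N) (ht : 0 ≤ t) (hn : 1 ≤ n ∨ t < 1) (hy : y ∈ Ico (0 : ℝ) 1) :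
    sVar N t y n < 1 := by
  cases n with
  | zero => exact hn.resolve_left (by simp)
  | succ n => exact (invBranch_mem_Ico hN (le_digit n hy) (sVar_nonneg hN ht hy n)).2

lemma invBranch_mem_Ico_iff (hN : 1 ≤ N) (hi : (N : ℤ) ≤ i) (hj : (N : ℤ) ≤ j)
    (hs : s ∈ Ico (0 : ℝ) 1) (hθ : θ ∈ Icc (0 : ℝ) 1) :
    invBranch N j s ∈ Ico (invBranch N i 0) (invBranch N i θ) ↔ j = i ∧ s < θ := by
  have hN' : (1 : ℝ) ≤ N := mod_cast hN
  have hi' : (N : ℝ) ≤ i := mod_cast hi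
  have hj' : (N : ℝ) ≤ j := mod_cast hj
  obtain ⟨hs0, hs1⟩ := hs
  obtain ⟨hθ0, hθ1⟩ := hθ
  rw [mem_Ico, ← not_le, invBranch_le_invBranch_iff hN (by linarith) (by linarith),
    invBranch_le_invBranch_iff hN (by linarith) (by linarith), not_le, add_zero]
  constructor
  · rintro ⟨hle, hlt⟩
    have hij : i < j + 1 := mod_cast (by linarith : (i : ℝ) < j + 1)
    have hji : j < i + 1 := mod_cast (by linarith : (j : ℝ) < i + 1)
    obtain rfl : j = i := by omega
    exact ⟨rfl, by linarith⟩
  · rintro ⟨rfl, hlt⟩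
    exact ⟨by linarith, by linarith⟩

/-! ### Measurability -/

lemma measurable_RN (N : ℕ) : Measurable (RN N) := by
  rw [funext (RN_eq_fract N)]
  fun_prop

@[fun_prop]
lemma measurable_digit (N n : ℕ) : Measurable (digit N n) := by
  have h0 : Measurable fun x : ℝ => ⌊(N : ℝ) / (1 - x)⌋ := by fun_prop
  exact h0.comp ((measurable_RN N).iterate n)

lemma measurable_sVar (N : ℕ) (t : ℝ) (n : ℕ) : Measurable fun y => sVar N t y n := by
  induction n with
  | zero => exact measurable_const
  | succ n ih =>
    simp only [sVar]
    fun_prop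

@[fun_prop]
lemma measurable_rhoDensity (N : ℕ) (t : ℝ) : Measurable (rhoDensity N t) := by
  unfold rhoDensity
  fun_prop

lemma measurable_digitProb (N : ℕ) (i : ℤ) : Measurable (digitProb N i) := by
  unfold digitProb
  fun_prop

lemma measurableSet_digit_and_sVar_mem (N : ℕ) (t : ℝ) (n : ℕ) (i : ℤ) {B : Set ℝ}
    (hB : MeasurableSet B) : MeasurableSet {y | digit N n y = i ∧ sVar N t y n ∈ B} :=
  (measurable_digit N n (measurableSet_singleton i)).inter (measurable_sVar N t n hB)

/-! ### The measures `ρ^t_N` -/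

lemma rhoT_apply (N : ℕ) (t : ℝ) {B : Set ℝ} (hB : MeasurableSet B) :
    rhoT N t B = ∫⁻ x in B ∩ Ico 0 1, ENNReal.ofReal (rhoDensity N t x) := by
  rw [rhoT, withDensity_apply _ hB, ← Measure.restrict_congr_set Ico_ae_eq_Icc,
    Measure.restrict_restrict hB]
  rfl

lemma ae_rhoT_mem_Ico (N : ℕ) (t : ℝ) : ∀ᵐ y ∂rhoT N t, y ∈ Ico (0 : ℝ) 1 := by
  rw [ae_iff, ← compl_def, rhoT_apply N t measurableSet_Ico.compl, compl_inter_self,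
    setLIntegral_empty]

lemma rhoDensity_denom_pos (hN : 1 ≤ N) (ht : 1 - (N : ℝ) < t) (hx : x ∈ Icc (0 : ℝ) 1) :
    0 < (N : ℝ) - (1 - x) * (1 - t) := by
  have hN0 : (0 : ℝ) < N := mod_cast hN
  rw [show (N : ℝ) - (1 - x) * (1 - t) = (1 - x) * (N - 1 + t) + x * N by ring]
  rcases hx.2.eq_or_lt with rfl | hx1
  · linarith
  · exact add_pos_of_pos_of_nonneg (mul_pos (sub_pos.2 hx1) (by linarith))
      (mul_nonneg hx.1 hN0.le)

lemma rhoDensity_nonneg (ht : 1 - (N : ℝ) ≤ t) (x : ℝ) : 0 ≤ rhoDensity N t x :=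
  div_nonneg (mul_nonneg N.cast_nonneg (by linarith)) (sq_nonneg _)

lemma digitProb_nonneg (hi : (N : ℤ) ≤ i) (hs : 1 - (N : ℝ) ≤ s) : 0 ≤ digitProb N i s := by
  have hi' : (N : ℝ) ≤ i := mod_cast hi
  exact div_nonneg (by linarith) (mul_nonneg (by linarith) (by linarith))

lemma continuousOn_rhoDensity (hN : 1 ≤ N) (ht : 1 - (N : ℝ) < t) :
    ContinuousOn (rhoDensity N t) (Icc 0 1) :=
  ContinuousOn.div (by fun_prop) (by fun_prop)
    fun _ hx => pow_ne_zero _ (rhoDensity_denom_pos hN ht hx).ne'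

lemma hasDerivAt_rhoT_cdf (hN : 1 ≤ N) (ht : 1 - (N : ℝ) < t) (hx : x ∈ Icc (0 : ℝ) 1) :
    HasDerivAt (fun x : ℝ => N * x / (N - (1 - x) * (1 - t))) (rhoDensity N t x) x := by
  have hnum : HasDerivAt (fun x : ℝ => N * x) (N * 1 : ℝ) x := (hasDerivAt_id x).const_mul _
  have hden : HasDerivAt (fun x : ℝ => N - (1 - x) * (1 - t)) (-(-1 * (1 - t))) x :=
    (((hasDerivAt_id x).const_sub 1).mul_const _).const_sub _
  exact (hnum.div hden (rhoDensity_denom_pos hN ht hx).ne').congr_deriv (by rw [rhoDensity]; ring)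

lemma isProbabilityMeasure_rhoT (hN : 1 ≤ N) (ht : 1 - (N : ℝ) < t) :
    IsProbabilityMeasure (rhoT N t) := by
  have hcont := continuousOn_rhoDensity hN ht
  have hmass : ∫ x in (0 : ℝ)..1, rhoDensity N t x = 1 := by
    have hN0 : (N : ℝ) ≠ 0 := by positivity
    rw [← uIcc_of_le zero_le_one] at hcont
    rw [intervalIntegral.integral_eq_sub_of_hasDerivAt
      (fun x hx => hasDerivAt_rhoT_cdf hN ht (uIcc_of_le (zero_le_one' ℝ) ▸ hx))
      hcont.intervalIntegrable]
    simp [hN0]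
  constructor
  rw [rhoT_apply N t MeasurableSet.univ, univ_inter, Measure.restrict_congr_set Ico_ae_eq_Icc,
    ← ofReal_integral_eq_lintegral_ofReal hcont.integrableOn_Icc
      (.of_forall (rhoDensity_nonneg ht.le)),
    integral_Icc_eq_integral_Ioc, ← intervalIntegral.integral_of_le zero_le_one, hmass,
    ENNReal.ofReal_one]

/-! ### Conditioning on the first digit -/

lemma deriv_invBranch_mul_rhoDensity (hN : 1 ≤ N) (hi : (N : ℤ) ≤ i) (hs : 1 - (N : ℝ) < s)
    (hz : 0 ≤ z) :
    (N : ℝ) / (i + z) ^ 2 * rhoDensity N s (invBranch N i z) =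
      digitProb N i s * rhoDensity N (invBranch N i s) z := by
  have hN' : (1 : ℝ) ≤ N := mod_cast hN
  have hi' : (N : ℝ) ≤ i := mod_cast hi
  have hiz : 0 < (i : ℝ) + z := by linarith
  have his : 0 < (i : ℝ) + s := by linarith
  have his' : 0 < (i : ℝ) + s - 1 := by linarith
  have hizs : 0 < (i : ℝ) + z + s - 1 := by linarith
  have hdenom_left :
      (N : ℝ) - (1 - invBranch N i z) * (1 - s) = N * (i + z + s - 1) / (i + z) := by
    rw [invBranch]; field_simp; ring
  have hdenom_right :
      (N : ℝ) - (1 - z) * (1 - invBranch N i s) = N * (i + z + s - 1) / (i + s) := by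
    rw [invBranch]; field_simp; ring
  have hnum_right : (N : ℝ) - 1 + invBranch N i s = N * (i + s - 1) / (i + s) := by
    rw [invBranch]; field_simp; ring
  rw [rhoDensity, rhoDensity, digitProb, hdenom_left, hdenom_right, hnum_right, add_comm s (i : ℝ)]
  field_simp
  ring

lemma rhoT_digit_zero_inter_preimage_RN (hN : 1 ≤ N) (hi : (N : ℤ) ≤ i) (ht : 1 - (N : ℝ) < t)
    {B : Set ℝ} (hB : MeasurableSet B) :
    rhoT N t (digit N 0 ⁻¹' {i} ∩ RN N ⁻¹' B) =
      ENNReal.ofReal (digitProb N i t) * rhoT N (invBranch N i t) B := by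
  have hN' : (1 : ℝ) ≤ N := mod_cast hN
  have hi' : (N : ℝ) ≤ i := mod_cast hi
  have hBI : MeasurableSet (B ∩ Ico 0 1) := hB.inter measurableSet_Ico
  have hcylinder : MeasurableSet (digit N 0 ⁻¹' {i} ∩ RN N ⁻¹' B) :=
    (measurable_digit N 0 (measurableSet_singleton i)).inter (measurable_RN N hB)
  have hderiv : ∀ z ∈ B ∩ Ico 0 1,
      HasDerivWithinAt (invBranch N i) ((N : ℝ) / (i + z) ^ 2) (B ∩ Ico 0 1) z := fun z hz =>
    (hasDerivAt_invBranch N (by linarith [hz.2.1])).hasDerivWithinAt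
  have hinj : InjOn (invBranch N i) (B ∩ Ico 0 1) :=
    LeftInvOn.injOn fun z hz => RN_invBranch hN i hz.2
  rw [rhoT_apply N t hcylinder, digit_zero_inter_preimage_RN hN hi,
    lintegral_image_eq_lintegral_abs_deriv_mul hBI hderiv hinj, rhoT_apply N _ hB,
    ← lintegral_const_mul _ (by fun_prop)]
  refine setLIntegral_congr_fun hBI fun z hz => ?_
  rw [abs_of_nonneg (by positivity), ← ENNReal.ofReal_mul (by positivity),
    ← ENNReal.ofReal_mul (digitProb_nonneg hi ht.le),
    deriv_invBranch_mul_rhoDensity hN hi ht hz.2.1]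

lemma rhoT_digit_zero_eq (hN : 1 ≤ N) (hi : (N : ℤ) ≤ i) (ht : 1 - (N : ℝ) < t) :
    rhoT N t {y | digit N 0 y = i} = ENNReal.ofReal (digitProb N i t) := by
  have := isProbabilityMeasure_rhoT hN (one_sub_lt_invBranch hN hi ht)
  have h := rhoT_digit_zero_inter_preimage_RN hN hi ht MeasurableSet.univ
  rwa [preimage_univ, inter_univ, measure_univ, mul_one] at h

lemma rhoT_RN_mem_eq_tsum (hN : 1 ≤ N) (ht : 1 - (N : ℝ) < t) {F : ℤ → Set ℝ}
    (hF : ∀ j, MeasurableSet (F j)) :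
    rhoT N t {y | RN N y ∈ F (digit N 0 y)} =
      ∑' j : Ici (N : ℤ), ENNReal.ofReal (digitProb N j t) * rhoT N (invBranch N j t) (F j) := by
  have hcover : {y | RN N y ∈ F (digit N 0 y)} =ᵐ[rhoT N t]
      ⋃ j : Ici (N : ℤ), digit N 0 ⁻¹' {(j : ℤ)} ∩ RN N ⁻¹' F j := by
    filter_upwards [ae_rhoT_mem_Ico N t] with y hy
    refine propext (Iff.trans ⟨fun hRN => ?_, ?_⟩ mem_iUnion.symm)
    · exact ⟨⟨digit N 0 y, le_digit_zero hy⟩, rfl, hRN⟩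
    · rintro ⟨⟨j, _⟩, hj, hRN⟩
      obtain rfl : digit N 0 y = j := hj
      exact hRN
  rw [measure_congr hcover, measure_iUnion]
  · exact tsum_congr fun j => rhoT_digit_zero_inter_preimage_RN hN j.2 ht (hF j)
  · intro j k hjk
    refine Disjoint.mono inter_subset_left inter_subset_left (Disjoint.preimage _ ?_)
    exact disjoint_singleton.2 (Subtype.coe_injective.ne hjk)
  · exact fun j => (measurable_digit N 0 (measurableSet_singleton _)).inter (measurable_RN N (hF j))

lemma map_sVar_succ_rhoT (hN : 1 ≤ N) (ht : 1 - (N : ℝ) < t) (n : ℕ) :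
    (rhoT N t).map (fun y => sVar N t y (n + 1)) =
      Measure.sum fun j : Ici (N : ℤ) => ENNReal.ofReal (digitProb N j t) •
        (rhoT N (invBranch N j t)).map fun y => sVar N (invBranch N j t) y n := by
  ext B hB
  simp only [Measure.map_apply (measurable_sVar N _ _) hB, Measure.sum_apply _ hB,
    Measure.smul_apply, smul_eq_mul]
  simp only [preimage, sVar_succ_eq_sVar_RN]
  exact rhoT_RN_mem_eq_tsum hN ht fun j => measurable_sVar N (invBranch N j t) n hB

/-! ### The joint law of `a_{n+1}` and `s^t_{N,n}` -/

theorem rhoT_digit_and_sVar_mem (hN : 1 ≤ N) (hi : (N : ℤ) ≤ i) (ht : 1 - (N : ℝ) < t) (n : ℕ)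
    {B : Set ℝ} (hB : MeasurableSet B) :
    rhoT N t {y | digit N n y = i ∧ sVar N t y n ∈ B} =
      ∫⁻ s in B, ENNReal.ofReal (digitProb N i s) ∂(rhoT N t).map fun y => sVar N t y n := by
  induction n generalizing t with
  | zero =>
    have := isProbabilityMeasure_rhoT hN ht
    simp only [sVar, Measure.map_const, measure_univ, one_smul]
    classical
    rw [setLIntegral_dirac' (measurable_digitProb N i).ennreal_ofReal hB]
    by_cases htB : t ∈ B <;> simp [htB, rhoT_digit_zero_eq hN hi ht]
  | succ n ih =>
    rw [map_sVar_succ_rhoT hN ht, Measure.restrict_sum _ hB, lintegral_sum_measure]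
    simp only [digit_succ, sVar_succ_eq_sVar_RN]
    have hsplit := rhoT_RN_mem_eq_tsum hN ht
      fun j => measurableSet_digit_and_sVar_mem N (invBranch N j t) n i hB
    refine hsplit.trans (tsum_congr fun j => ?_)
    rw [ih (one_sub_lt_invBranch hN j.2 ht), Measure.restrict_smul, lintegral_smul_measure,
      smul_eq_mul]

lemma rhoT_real_digit_and_sVar_lt (hN : 1 ≤ N) (hi : (N : ℤ) ≤ i) (ht : 0 ≤ t)
    (hNt : 1 - (N : ℝ) < t) (n : ℕ) (θ : ℝ) :
    (rhoT N t).real {y | digit N n y = i ∧ sVar N t y n < θ} =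
      ∫ s in Ico 0 θ, digitProb N i s ∂(rhoT N t).map fun y => sVar N t y n := by
  have hIco : {y | digit N n y = i ∧ sVar N t y n < θ} =ᵐ[rhoT N t]
      {y | digit N n y = i ∧ sVar N t y n ∈ Ico 0 θ} := by
    filter_upwards [ae_rhoT_mem_Ico N t] with y hy
    exact propext (and_congr_right fun _ => (and_iff_right (sVar_nonneg hN ht hy n)).symm)
  have hnonneg : 0 ≤ᵐ[((rhoT N t).map fun y => sVar N t y n).restrict (Ico 0 θ)] digitProb N i := by
    filter_upwards [ae_restrict_mem measurableSet_Ico] with s hs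
    have hN' : (1 : ℝ) ≤ N := mod_cast hN
    exact digitProb_nonneg hi (by linarith [hs.1])
  rw [measureReal_congr hIco, measureReal_def,
    rhoT_digit_and_sVar_mem hN hi hNt n measurableSet_Ico,
    integral_eq_lintegral_of_nonneg_ae hnonneg (measurable_digitProb N i).aestronglyMeasurable]

lemma Gt_succ_sub (hN : 1 ≤ N) (ht : 1 - (N : ℝ) < t) (n : ℕ) {a b : ℝ} (hab : a ≤ b) :
    Gt N t (n + 1) b - Gt N t (n + 1) a =
      (rhoT N t).real {y | sVar N t y (n + 1) ∈ Ico a b} := by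
  have := isProbabilityMeasure_rhoT hN ht
  have hdiff : {y | sVar N t y (n + 1) ∈ Ico a b} =
      {y | sVar N t y (n + 1) < b} \ {y | sVar N t y (n + 1) < a} := by
    ext y
    simp [and_comm]
  have hsub : {y | sVar N t y (n + 1) < a} ⊆ {y | sVar N t y (n + 1) < b} :=
    fun y hy => lt_of_lt_of_le hy hab
  rw [hdiff, measureReal_sdiff hsub (measurable_sVar N t (n + 1) measurableSet_Iio)]
  rfl

lemma sVar_succ_mem_Ico_ae_eq (hN : 1 ≤ N) (hi : (N : ℤ) ≤ i) (ht : 0 ≤ t)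
    (hn : 1 ≤ n ∨ t < 1) (hθ : θ ∈ Icc (0 : ℝ) 1) :
    {y | sVar N t y (n + 1) ∈ Ico (invBranch N i 0) (invBranch N i θ)} =ᵐ[rhoT N t]
      {y | digit N n y = i ∧ sVar N t y n < θ} := by
  filter_upwards [ae_rhoT_mem_Ico N t] with y hy
  exact propext (invBranch_mem_Ico_iff hN hi (le_digit n hy)
    ⟨sVar_nonneg hN ht hy n, sVar_lt_one hN ht hn hy⟩ hθ)

end

theorem stmt8_general (N : ℕ) (hN : 1 ≤ N) (t : ℝ) (ht : 0 ≤ t) (hNt : 1 - (N : ℝ) < t)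
    (n : ℕ) (hn : 1 ≤ n ∨ t < 1) (i : ℤ) (hi : (N : ℤ) ≤ i) (θ : ℝ) (hθ : θ ∈ Icc (0 : ℝ) 1) :
    (rhoT N t {y | digit N n y = i ∧ sVar N t y n < θ}).toReal
      = (∫ s in Ico (0 : ℝ) θ, (s + (N : ℝ) - 1) / ((s + (i : ℝ)) * (s + (i : ℝ) - 1))
          ∂(Measure.map (fun y => sVar N t y n) (rhoT N t))) ∧
    Gt N t (n + 1) (1 - (N : ℝ) / ((i : ℝ) + θ)) - Gt N t (n + 1) (1 - (N : ℝ) / (i : ℝ))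
      = ∫ s in Ico (0 : ℝ) θ, (s + (N : ℝ) - 1) / ((s + (i : ℝ)) * (s + (i : ℝ) - 1))
          ∂(Measure.map (fun y => sVar N t y n) (rhoT N t)) := by
  have hlaw := rhoT_real_digit_and_sVar_lt hN hi ht hNt n θ
  have hle : invBranch N i 0 ≤ invBranch N i θ := by
    have hi0 : (0 : ℝ) < i := mod_cast (show (0 : ℤ) < i by omega)
    exact (invBranch_le_invBranch_iff hN (by linarith) (by linarith [hθ.1])).2 (by linarith [hθ.1])
  have hG : Gt N t (n + 1) (invBranch N i θ) - Gt N t (n + 1) (invBranch N i 0) =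
      (rhoT N t).real {y | digit N n y = i ∧ sVar N t y n < θ} := by
    rw [Gt_succ_sub hN hNt n hle, measureReal_congr (sVar_succ_mem_Ico_ae_eq hN hi ht hn hθ)]
  rw [invBranch, invBranch, add_zero] at hG
  exact ⟨hlaw, hG.trans hlaw⟩

theorem stmt8 (N : ℕ) (hN : 2 ≤ N) (t : ℝ) (ht : t ∈ Set.Icc (0 : ℝ) 1)
    (n : ℕ) (hn : 1 ≤ n) (i : ℤ) (hi : (N : ℤ) ≤ i) (θ : ℝ) (hθ : θ ∈ Set.Ico (0 : ℝ) 1) :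
    (rhoT N t {y | digit N n y = i ∧ sVar N t y n < θ}).toReal
      = (∫ s in Set.Ico (0 : ℝ) θ, (s + (N : ℝ) - 1) / ((s + (i : ℝ)) * (s + (i : ℝ) - 1))
          ∂(Measure.map (fun y => sVar N t y n) (rhoT N t))) ∧
    Gt N t (n + 1) (1 - (N : ℝ) / ((i : ℝ) + θ)) - Gt N t (n + 1) (1 - (N : ℝ) / (i : ℝ))
      = ∫ s in Set.Ico (0 : ℝ) θ, (s + (N : ℝ) - 1) / ((s + (i : ℝ)) * (s + (i : ℝ) - 1))
          ∂(Measure.map (fun y => sVar N t y n) (rhoT N t)) := by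
  have hN' : (2 : ℝ) ≤ N := mod_cast hN
  exact stmt8_general N (by omega) t ht.1 (by linarith [ht.1]) n (.inl hn) i hi θ
    (Ico_subset_Icc_self hθ)
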